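/- Let n ≥ 2, let π/2 < D < π, and let C ⊆ S^n be a solid D-maximal set. Then there exists a strongly regular boundary point x₀ ∈ ∂C such that for every 2-dimensional linear subspace L of ℝ^{n+1} with x₀ ∈ L and every ε ∈ (0, π/2), there exists a strongly regular boundary point y ∈ ∂C with d(y, x₀) < ε and y ∉ L. -/

import Mathlib

/-!
Suppose that near each strongly regular point `x` all strongly regular points lie in a proper
subspace. As strongly regular points are dense in `∂C`, the boundary then lies in a hyperplane near
`x` (`IsFlatAt`), so that `C` is locally a half-space (`IsHalfSpaceOn`) and `∂C` contains every
point of the hyperplane `ν^⊥` near `x`.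

Maximality of the volume enters only through the fact that each boundary point is at distance `D`
from some point of `C`: otherwise a small ball could be added to `C`. By first variation, the only
point of `C` at distance `D` from a point `x` of `ν^⊥` is `greatCircle x ν D`, so these points fill
a piece of a small sphere in `∂C`. Likewise, the points of `C` at distance `D` from
`greatCircle x ν D` can only be `x` and `greatCircle x ν (2 * D)`.

If `greatCircle x ν (2 * D)` is in `C` for all such `x`, then the distances to `x` and to this point
squeeze `C` into a hypersurface near `greatCircle x ν D`, against `C = closure (interior C)`.
Otherwise, near some `greatCircle x ν D`, all of `∂C` consists of points `greatCircle p ν D` with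
`p ∈ ν^⊥`. At a strongly regular point there, `∂C` contains a piece of a small sphere of dimension
`n - 1 ≥ 1` and lies in a hyperplane through the origin, which is impossible.
-/

open MeasureTheory

noncomputable section

/-- Euclidean space `ℝ^{n+1}`. -/
abbrev Esp (n : ℕ) : Type := EuclideanSpace ℝ (Fin (n + 1))

/-- The unit sphere `S^n ⊆ ℝ^{n+1}`, as a subtype. -/
abbrev Sph (n : ℕ) : Type := Metric.sphere (0 : Esp n) 1

/-- Geodesic distance `d(x,y) = arccos ⟨x,y⟩` on the sphere. -/
def gd {n : ℕ} (x y : Sph n) : ℝ :=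
  Real.arccos (inner (𝕜 := ℝ) (x : Esp n) (y : Esp n))

/-- Closed geodesic ball `B(z,r) = {x ∈ Sⁿ : d(x,z) ≤ r}`. -/
def sphBall {n : ℕ} (z : Sph n) (r : ℝ) : Set (Sph n) := {x | gd x z ≤ r}

/-- Geodesic diameter `diam X = sup {d(x,y) : x, y ∈ X}`. -/
def sphDiam {n : ℕ} (X : Set (Sph n)) : ℝ :=
  sSup {r | ∃ x ∈ X, ∃ y ∈ X, r = gd x y}

/-- Spherical volume: the `n`-dimensional (Hausdorff) surface measure on `S^n`. -/
def sphVol (n : ℕ) : Measure (Sph n) := μH[(n : ℝ)]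

/-- A set `C ⊆ S^n` is `D`-maximal: compact, of geodesic diameter at most `D`, and of
maximal spherical volume among compact sets of diameter at most `D`. -/
def DMaximal (n : ℕ) (D : ℝ) (C : Set (Sph n)) : Prop :=
  IsCompact C ∧ sphDiam C ≤ D ∧
    sphVol n C =
      sSup {v | ∃ X : Set (Sph n), IsCompact X ∧ sphDiam X ≤ D ∧ v = sphVol n X}

/-- A nonempty compact set `C ⊆ S^n`, `C ≠ S^n`, is solid if it equals the closure
of its interior (in the topology of `S^n`). -/
def Solid {n : ℕ} (C : Set (Sph n)) : Prop :=
  C.Nonempty ∧ IsCompact C ∧ C ≠ Set.univ ∧ C = closure (interior C)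

/-- `x` is a strongly regular boundary point of `C`: `x ∈ ∂C` and there are `r > 0`
and `z ∈ C` with `B(z,r) ⊆ C` and `d(x,z) = r`. -/
def StronglyRegular {n : ℕ} (C : Set (Sph n)) (x : Sph n) : Prop :=
  x ∈ frontier C ∧ ∃ r > 0, ∃ z ∈ C, sphBall z r ⊆ C ∧ gd x z = r

open Filter Topology Metric
open scoped RealInnerProductSpace

theorem subset_or_subset_compl_of_disjoint_frontier {X : Type*} [TopologicalSpace X]
    {C T : Set X} (hT : IsPreconnected T) (hd : Disjoint T (frontier C)) : T ⊆ C ∨ T ⊆ Cᶜ := by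
  have hcover : T ⊆ interior C ∪ interior Cᶜ := by
    rw [← compl_frontier_eq_union_interior]
    exact hd.subset_compl_right
  have hdisj : Disjoint (interior C) (interior Cᶜ) :=
    disjoint_compl_right.mono interior_subset interior_subset
  exact (hT.subset_or_subset isOpen_interior isOpen_interior hdisj hcover).imp
    (·.trans interior_subset) (·.trans interior_subset)

theorem measure_lt_measure_union_of_mem_frontier {X : Type*} [TopologicalSpace X]
    [MeasurableSpace X] [OpensMeasurableSpace X] {μ : Measure X} [μ.IsOpenPosMeasure]
    {C B : Set X} {x : X} (hC : IsClosed C) (hfin : μ C ≠ ⊤) (hx : x ∈ frontier C)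
    (hB : B ∈ 𝓝 x) : μ C < μ (C ∪ B) := by
  have hopen : IsOpen (interior B \ C) := isOpen_interior.sdiff hC
  have hne : (interior B \ C).Nonempty := by
    rw [frontier_eq_closure_inter_closure] at hx
    exact mem_closure_iff_nhds.1 hx.2 _ (interior_mem_nhds.2 hB)
  calc μ C < μ C + μ (interior B \ C) := ENNReal.lt_add_right hfin (hopen.measure_pos μ hne).ne'
    _ = μ (C ∪ interior B \ C) :=
        (measure_union Set.disjoint_sdiff_right hopen.measurableSet).symm
    _ ≤ μ (C ∪ B) := by gcongr; exact Set.sdiff_subset.trans interior_subset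

section HausdorffMeasure

variable {X Y : Type*} [EMetricSpace X] [MeasurableSpace X] [BorelSpace X] [EMetricSpace Y]
  [MeasurableSpace Y] [BorelSpace Y] {f : X → Y} {x : X} {K : NNReal} {t : Set X} {d : ℝ}

theorem finiteAtFilter_hausdorffMeasure_of_lipschitzOnWith (hd : 0 ≤ d) (ht : t ∈ 𝓝 x)
    (hf : LipschitzOnWith K f t) (hx : 𝓝 (f x) ≤ map f (𝓝 x))
    (hfin : (μH[d] : Measure X).FiniteAtFilter (𝓝 x)) :
    (μH[d] : Measure Y).FiniteAtFilter (𝓝 (f x)) := by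
  obtain ⟨s, hs, hsfin⟩ := hfin
  refine ⟨f '' (s ∩ t), hx (image_mem_map (inter_mem hs ht)), ?_⟩
  calc μH[d] (f '' (s ∩ t)) ≤ (K : ENNReal) ^ d * μH[d] (s ∩ t) :=
        (hf.mono Set.inter_subset_right).hausdorffMeasure_image_le hd
    _ ≤ (K : ENNReal) ^ d * μH[d] s := by gcongr; exact Set.inter_subset_left
    _ < ⊤ := ENNReal.mul_lt_top (ENNReal.rpow_lt_top_of_nonneg hd ENNReal.coe_ne_top) hsfin

theorem hausdorffMeasure_pos_of_lipschitzOnWith [(μH[d] : Measure Y).IsOpenPosMeasure]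
    (hd : 0 ≤ d) (ht : t ∈ 𝓝 x) (hf : LipschitzOnWith K f t) (hx : 𝓝 (f x) ≤ map f (𝓝 x))
    {U : Set X} (hU : U ∈ 𝓝 x) : 0 < μH[d] U := by
  have hpos : 0 < μH[d] (f '' (U ∩ t)) :=
    Measure.measure_pos_of_mem_nhds _ (hx (image_mem_map (inter_mem hU ht)))
  have hle := (hf.mono Set.inter_subset_right).hausdorffMeasure_image_le (s := U ∩ t) hd
  exact (pos_of_mul_pos_right (hpos.trans_le hle) bot_le).trans_le
    (measure_mono Set.inter_subset_left)

end HausdorffMeasure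

section Sphere

variable {E : Type*} [NormedAddCommGroup E] [InnerProductSpace ℝ E]

/-! ### Great circles -/

theorem inner_self_sphere (x : sphere (0 : E) 1) : ⟪(x : E), x⟫ = 1 := by
  rw [real_inner_self_eq_norm_sq, norm_eq_of_mem_sphere, one_pow]

theorem inner_sphere_eq_one_sub_dist_sq (x y : sphere (0 : E) 1) :
    ⟪(x : E), y⟫ = 1 - dist x y ^ 2 / 2 := by
  have h := norm_sub_sq_real (x : E) y
  rw [norm_eq_of_mem_sphere, norm_eq_of_mem_sphere] at h
  rw [Subtype.dist_eq, dist_eq_norm]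
  linarith

theorem continuous_inner_sphere (w : E) : Continuous fun x : sphere (0 : E) 1 ↦ ⟪(x : E), w⟫ :=
  continuous_subtype_val.inner continuous_const

/-- The unit-speed great circle through `x` with initial velocity `u`, for orthonormal `x`, `u`. -/
def greatCircle (x u : E) (t : ℝ) : E := Real.cos t • x + Real.sin t • u

theorem greatCircle_zero (x u : E) : greatCircle x u 0 = x := by simp [greatCircle]

theorem continuous_greatCircle (x u : E) : Continuous (greatCircle x u) := by
  unfold greatCircle; fun_prop

theorem inner_greatCircle_left (x u w : E) (t : ℝ) :
    ⟪greatCircle x u t, w⟫ = Real.cos t * ⟪x, w⟫ + Real.sin t * ⟪u, w⟫ := by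
  rw [greatCircle, inner_add_left, real_inner_smul_left, real_inner_smul_left]

theorem hasDerivAt_inner_greatCircle (x u w : E) :
    HasDerivAt (fun t ↦ ⟪greatCircle x u t, w⟫) ⟪u, w⟫ 0 := by
  have h := ((Real.hasDerivAt_cos 0).mul_const ⟪x, w⟫).fun_add
    ((Real.hasDerivAt_sin 0).mul_const ⟪u, w⟫)
  simp only [inner_greatCircle_left]
  simpa using h

theorem inner_greatCircle_greatCircle {x u : E} (hx : ‖x‖ = 1) (hu : ‖u‖ = 1) (hxu : ⟪x, u⟫ = 0)
    (s t : ℝ) : ⟪greatCircle x u s, greatCircle x u t⟫ = Real.cos (s - t) := by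
  simp only [greatCircle, inner_add_left, inner_add_right, real_inner_smul_left,
    real_inner_smul_right, real_inner_self_eq_norm_sq, real_inner_comm x u, hx, hu, hxu,
    Real.cos_sub]
  ring

theorem norm_greatCircle {x u : E} (hx : ‖x‖ = 1) (hu : ‖u‖ = 1) (hxu : ⟪x, u⟫ = 0) (t : ℝ) :
    ‖greatCircle x u t‖ = 1 := by
  have h := inner_greatCircle_greatCircle hx hu hxu t t
  rw [sub_self, Real.cos_zero, real_inner_self_eq_norm_sq] at h
  exact (pow_eq_one_iff_of_nonneg (norm_nonneg _) two_ne_zero).1 h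

theorem inner_greatCircle_right_self {x u : E} (hu : ‖u‖ = 1) (hxu : ⟪x, u⟫ = 0) (t : ℝ) :
    ⟪greatCircle x u t, u⟫ = Real.sin t := by
  rw [inner_greatCircle_left, hxu, real_inner_self_eq_norm_sq, hu]
  ring

theorem eventually_exists_eq_greatCircle {x : sphere (0 : E) 1} {u : E} (hu : ‖u‖ = 1)
    (hxu : ⟪(x : E), u⟫ = 0) {V : Set (sphere (0 : E) 1)} (hV : V ∈ 𝓝 x) :
    ∀ᶠ t in 𝓝 (0 : ℝ), ∃ z ∈ V, (z : E) = greatCircle (x : E) u t := by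
  have hγ (t : ℝ) : greatCircle (x : E) u t ∈ sphere (0 : E) 1 :=
    mem_sphere_zero_iff_norm.2 (norm_greatCircle (norm_eq_of_mem_sphere x) hu hxu t)
  have hcont : Continuous fun t ↦ (⟨_, hγ t⟩ : sphere (0 : E) 1) :=
    (continuous_greatCircle (x : E) u).subtype_mk hγ
  have h0 : (⟨_, hγ 0⟩ : sphere (0 : E) 1) = x := Subtype.ext (greatCircle_zero _ _)
  filter_upwards [hcont.tendsto 0 (h0 ▸ hV)] with t ht using ⟨_, ht, rfl⟩

/-! ### First variation of inner products -/

theorem inner_nonneg_of_isLocalMinOn {x : sphere (0 : E) 1} {u w : E} {K : Set E}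
    (hxu : ⟪(x : E), u⟫ = 0) (hK : ∀ a b : ℝ, 0 < a → 0 < b → a • (x : E) + b • u ∈ K)
    (hmin : IsLocalMinOn (fun z : sphere (0 : E) 1 ↦ ⟪(z : E), w⟫) (Subtype.val ⁻¹' K) x) :
    0 ≤ ⟪u, w⟫ := by
  rcases eq_or_ne u 0 with rfl | hu
  · rw [inner_zero_left]
  set e : E := ‖u‖⁻¹ • u with he
  have hxe : ⟪(x : E), e⟫ = 0 := by rw [he, real_inner_smul_right, hxu, mul_zero]
  have he1 : ‖e‖ = 1 := by
    rw [he, norm_smul, norm_inv, norm_norm, inv_mul_cancel₀ (norm_ne_zero_iff.2 hu)]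
  have hcos : ∀ᶠ t : ℝ in 𝓝 0, 0 < Real.cos t :=
    continuous_const.continuousAt.eventually_lt Real.continuous_cos.continuousAt (by simp)
  have hnonneg : 0 ≤ ⟪e, w⟫ := by
    refine ge_of_tendsto (hasDerivAt_inner_greatCircle (x : E) e w).tendsto_slope_zero_right ?_
    filter_upwards [self_mem_nhdsWithin, nhdsWithin_le_nhds hcos,
      Ioo_mem_nhdsGT Real.pi_pos, nhdsWithin_le_nhds (eventually_exists_eq_greatCircle
        he1 hxe (eventually_nhdsWithin_iff.1 hmin))] with t ht htcos htpi hz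
    obtain ⟨z, hz, hzt⟩ := hz
    have hzK : (z : E) ∈ K := by
      rw [hzt, greatCircle, he, smul_smul]
      exact hK _ _ htcos (mul_pos (Real.sin_pos_of_mem_Ioo htpi) (by positivity))
    have hle := hz hzK
    rw [zero_add, greatCircle_zero, ← hzt]
    exact smul_nonneg (inv_nonneg.2 (le_of_lt ht)) (sub_nonneg.2 hle)
  rw [he, real_inner_smul_left] at hnonneg
  exact nonneg_of_mul_nonneg_right hnonneg (by positivity)

theorem inner_nonpos_of_isLocalMaxOn {x : sphere (0 : E) 1} {u w : E} {K : Set E}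
    (hxu : ⟪(x : E), u⟫ = 0) (hK : ∀ a b : ℝ, 0 < a → 0 < b → a • (x : E) + b • u ∈ K)
    (hmax : IsLocalMaxOn (fun z : sphere (0 : E) 1 ↦ ⟪(z : E), w⟫) (Subtype.val ⁻¹' K) x) :
    ⟪u, w⟫ ≤ 0 := by
  have hmin := hmax.neg
  simp only [← inner_neg_right] at hmin
  simpa using inner_nonneg_of_isLocalMinOn hxu hK hmin

theorem mem_closure_setOf_inner_lt {x : sphere (0 : E) 1} {w : E} (h : |⟪(x : E), w⟫| < ‖w‖) :
    x ∈ closure {z : sphere (0 : E) 1 | ⟪(x : E), w⟫ < ⟪(z : E), w⟫} := by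
  rw [mem_closure_iff_frequently]
  intro hmax
  have hxu : ⟪(x : E), w - ⟪(x : E), w⟫ • (x : E)⟫ = 0 := by
    rw [inner_sub_right, real_inner_smul_right, inner_self_sphere, mul_one, sub_self]
  have hle : ⟪w - ⟪(x : E), w⟫ • (x : E), w⟫ ≤ 0 :=
    inner_nonpos_of_isLocalMaxOn (K := Set.univ) hxu (fun _ _ _ _ ↦ Set.mem_univ _)
      (IsLocalMax.on (hmax.mono fun _ hz ↦ not_lt.1 hz) _)
  rw [inner_sub_left, real_inner_smul_left, real_inner_self_eq_norm_sq] at hle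
  nlinarith [abs_nonneg ⟪(x : E), w⟫, sq_abs ⟪(x : E), w⟫]

theorem not_isLocalMin_inner {x : sphere (0 : E) 1} {w : E} (h : |⟪(x : E), w⟫| < ‖w‖) :
    ¬ IsLocalMin (fun z : sphere (0 : E) 1 ↦ ⟪(z : E), w⟫) x := by
  intro hmin
  have hneg : |⟪(x : E), -w⟫| < ‖-w‖ := by rwa [inner_neg_right, abs_neg, norm_neg]
  refine mem_closure_iff_frequently.1 (mem_closure_setOf_inner_lt hneg) (hmin.mono fun z hz ↦ ?_)
  simpa [inner_neg_right] using hz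

theorem eq_of_isLocalMinOn_orthogonal {x : sphere (0 : E) 1} {ν w : E} (hν : ‖ν‖ = 1)
    (hxν : ⟪(x : E), ν⟫ = 0)
    (hmin : IsLocalMinOn (fun z : sphere (0 : E) 1 ↦ ⟪(z : E), w⟫)
      (Subtype.val ⁻¹' {v : E | ⟪v, ν⟫ = 0}) x) :
    w = ⟪(x : E), w⟫ • (x : E) + ⟪ν, w⟫ • ν := by
  set u : E := ⟪(x : E), w⟫ • (x : E) + ⟪ν, w⟫ • ν - w with hu
  have hνx : ⟪ν, (x : E)⟫ = 0 := by rw [real_inner_comm, hxν]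
  have hxu : ⟪(x : E), u⟫ = 0 := by
    simp [hu, inner_sub_right, inner_add_right, real_inner_smul_right, hxν]
  have hνu : ⟪ν, u⟫ = 0 := by
    simp [hu, inner_sub_right, inner_add_right, real_inner_smul_right, hνx, hν]
  have hnonneg : 0 ≤ ⟪u, w⟫ := by
    refine inner_nonneg_of_isLocalMinOn hxu (fun a b _ _ ↦ ?_) hmin
    rw [Set.mem_ofPred_eq, inner_add_left, real_inner_smul_left, real_inner_smul_left, hxν,
      real_inner_comm, hνu, mul_zero, mul_zero, add_zero]
  have hself : ⟪u, u⟫ = -⟪u, w⟫ := by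
    nth_rw 2 [hu]
    rw [inner_sub_right, inner_add_right, real_inner_smul_right, real_inner_smul_right,
      real_inner_comm _ u, hxu, real_inner_comm _ u, hνu, mul_zero, mul_zero, add_zero, zero_sub]
  have hzero : u = 0 := real_inner_self_nonpos.1 (by linarith : ⟪u, u⟫ ≤ 0)
  exact (sub_eq_zero.1 hzero).symm

/-! ### Caps and half-caps are connected -/

theorem isPreconnected_preimage_val {K : Set E} (hK : Convex ℝ K) (h0 : (0 : E) ∉ K)
    (hsmul : ∀ a : ℝ, 0 < a → ∀ v ∈ K, a • v ∈ K) :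
    IsPreconnected (Subtype.val ⁻¹' K : Set (sphere (0 : E) 1)) := by
  have hne (v : E) (hv : v ∈ K) : ‖v‖ ≠ 0 := fun h ↦ h0 (norm_eq_zero.1 h ▸ hv)
  have himage : Subtype.val '' (Subtype.val ⁻¹' K : Set (sphere (0 : E) 1)) =
      (fun v ↦ ‖v‖⁻¹ • v) '' K := by
    ext v
    constructor
    · rintro ⟨z, hz, rfl⟩
      exact ⟨z, hz, by simp⟩
    · rintro ⟨v, hv, rfl⟩
      have hmem : ‖v‖⁻¹ • v ∈ sphere (0 : E) 1 := by
        simp [norm_smul, inv_mul_cancel₀ (hne v hv)]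
      exact ⟨⟨_, hmem⟩, hsmul _ (by have := hne v hv; positivity) v hv, rfl⟩
  rw [← Topology.IsInducing.subtypeVal.isPreconnected_image, himage]
  exact hK.isPreconnected.image _ ((continuousOn_id.norm.inv₀ hne).smul continuousOn_id)

theorem isPreconnected_inter_cap {K : Set E} (hK : Convex ℝ K)
    (hsmul : ∀ a : ℝ, 0 < a → ∀ v ∈ K, a • v ∈ K) {k : ℝ} (hk : 0 ≤ k) (x : E) :
    IsPreconnected {z : sphere (0 : E) 1 | (z : E) ∈ K ∧ k < ⟪(z : E), x⟫} := by
  have hconv : ConvexOn ℝ Set.univ fun v : E ↦ k * ‖v‖ - ⟪v, x⟫ :=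
    (convexOn_univ_norm.smul hk).sub (((innerₗ E).flip x).concaveOn convex_univ)
  have hcone := isPreconnected_preimage_val (hK.inter (hconv.convex_lt 0)) (by simp)
    (fun a ha v hv ↦ ⟨hsmul a ha v hv.1, Set.mem_univ _, ?_⟩)
  · convert hcone using 1
    ext z
    simp
  · have := mul_neg_of_pos_of_neg ha hv.2.2
    simp only [norm_smul, real_inner_smul_left, Real.norm_of_nonneg ha.le]
    linarith

theorem isPreconnected_cap {k : ℝ} (hk : 0 ≤ k) (x : E) :
    IsPreconnected {z : sphere (0 : E) 1 | k < ⟪(z : E), x⟫} := by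
  simpa using isPreconnected_inter_cap convex_univ (fun _ _ _ _ ↦ Set.mem_univ _) hk x

theorem isPreconnected_half_cap {k : ℝ} (hk : 0 ≤ k) (x ν : E) :
    IsPreconnected {z : sphere (0 : E) 1 | 0 < ⟪(z : E), ν⟫ ∧ k < ⟪(z : E), x⟫} := by
  refine isPreconnected_inter_cap (K := {v | 0 < ⟪v, ν⟫})
    (convex_halfSpace_gt ((innerₗ E).flip ν).isLinear 0) (fun a ha v hv ↦ ?_) hk x
  rw [Set.mem_ofPred_eq, real_inner_smul_left]
  exact mul_pos ha hv

theorem exists_cap_subset {x : sphere (0 : E) 1} {V : Set (sphere (0 : E) 1)} (hV : V ∈ 𝓝 x) :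
    ∃ k : ℝ, 0 ≤ k ∧ k < 1 ∧ {z : sphere (0 : E) 1 | k < ⟪(z : E), x⟫} ⊆ V := by
  obtain ⟨r, hr, hrV⟩ := Metric.mem_nhds_iff.1 hV
  refine ⟨max 0 (1 - r ^ 2 / 2), le_max_left _ _, max_lt one_pos (by linarith [pow_pos hr 2]),
    fun z hz ↦ hrV ?_⟩
  have hlt : 1 - r ^ 2 / 2 < ⟪(z : E), x⟫ := (le_max_right 0 _).trans_lt hz
  rw [inner_sphere_eq_one_sub_dist_sq] at hlt
  exact Metric.mem_ball.2 (lt_of_pow_lt_pow_left₀ 2 hr.le (by linarith))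

theorem mem_closure_inter_inner_pos {V : Set (sphere (0 : E) 1)} (hV : IsOpen V) {ν : E}
    (hν : ν ≠ 0) {z : sphere (0 : E) 1} (hz : z ∈ V) (hzν : ⟪(z : E), ν⟫ = 0) :
    z ∈ closure (V ∩ {y | 0 < ⟪(y : E), ν⟫}) := by
  have h : z ∈ closure {y : sphere (0 : E) 1 | ⟪(z : E), ν⟫ < ⟪(y : E), ν⟫} :=
    mem_closure_setOf_inner_lt (by rwa [hzν, abs_zero, norm_pos_iff])
  rw [hzν] at h
  exact hV.inter_closure ⟨hz, h⟩

theorem dense_setOf_inner_ne_zero {ν : E} (hν : ν ≠ 0) :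
    Dense {z : sphere (0 : E) 1 | ⟪(z : E), ν⟫ ≠ 0} := by
  intro z
  rcases eq_or_ne ⟪(z : E), ν⟫ 0 with hzν | hzν
  · exact closure_mono (fun y hy ↦ hy.2.ne')
      (mem_closure_inter_inner_pos isOpen_univ hν (Set.mem_univ z) hzν)
  · exact subset_closure hzν

/-! ### Sets bounded by a hyperplane -/

/-- `C` coincides on the open set `V` with the closed half-space `{z | 0 ≤ ⟪z, ν⟫}` whose inner unit
normal is `ν`. -/
structure IsHalfSpaceOn (C V : Set (sphere (0 : E) 1)) (ν : E) : Prop where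
  isOpen : IsOpen V
  norm_normal : ‖ν‖ = 1
  mem_iff : ∀ z ∈ V, z ∈ C ↔ 0 ≤ ⟪(z : E), ν⟫

/-- Near `x`, the boundary of `C` lies in a hyperplane through the origin, with unit normal `m`. -/
def IsFlatAt (C : Set (sphere (0 : E) 1)) (x : sphere (0 : E) 1) : Prop :=
  ∃ m : E, ‖m‖ = 1 ∧ ∀ᶠ y in 𝓝 x, y ∈ frontier C → ⟪(y : E), m⟫ = 0

namespace IsHalfSpaceOn

variable {C V : Set (sphere (0 : E) 1)} {ν : E}

theorem normal_ne_zero (H : IsHalfSpaceOn C V ν) : ν ≠ 0 := by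
  rw [← norm_ne_zero_iff, H.norm_normal]
  exact one_ne_zero

theorem mem_frontier_iff (H : IsHalfSpaceOn C V ν) {z : sphere (0 : E) 1} (hz : z ∈ V) :
    z ∈ frontier C ↔ ⟪(z : E), ν⟫ = 0 := by
  rw [frontier_eq_closure_inter_closure]
  constructor
  · rintro ⟨hC, hCc⟩
    refine le_antisymm ?_ ?_
    · refine closure_minimal ?_ (isClosed_le (continuous_inner_sphere ν) continuous_const)
        (H.isOpen.inter_closure ⟨hz, hCc⟩)
      exact fun y hy ↦ (not_le.1 fun h ↦ hy.2 ((H.mem_iff y hy.1).2 h)).le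
    · refine closure_minimal ?_ (isClosed_le continuous_const (continuous_inner_sphere ν))
        (H.isOpen.inter_closure ⟨hz, hC⟩)
      exact fun y hy ↦ (H.mem_iff y hy.1).1 hy.2
  · intro hzν
    refine ⟨subset_closure ((H.mem_iff z hz).2 hzν.ge), ?_⟩
    refine closure_mono ?_ (mem_closure_inter_inner_pos H.isOpen (neg_ne_zero.2 H.normal_ne_zero)
      hz (by rw [inner_neg_right, hzν, neg_zero]))
    rintro y ⟨hyV, hy⟩ hyC
    rw [Set.mem_ofPred_eq, inner_neg_right] at hy
    linarith [(H.mem_iff y hyV).1 hyC]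

theorem of_inner_pos_of_inner_neg (hC : IsClosed C) (hV : IsOpen V) (hν : ‖ν‖ = 1)
    (hpos : ∀ z ∈ V, 0 < ⟪(z : E), ν⟫ → z ∈ C) (hneg : ∀ z ∈ V, ⟪(z : E), ν⟫ < 0 → z ∉ C) :
    IsHalfSpaceOn C V ν where
  isOpen := hV
  norm_normal := hν
  mem_iff z hz := by
    refine ⟨fun hzC ↦ not_lt.1 fun h ↦ hneg z hz h hzC, fun h ↦ ?_⟩
    rcases h.lt_or_eq with h | h
    · exact hpos z hz h
    · have hν0 : ν ≠ 0 := by rw [← norm_ne_zero_iff, hν]; exact one_ne_zero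
      exact closure_minimal (fun y hy ↦ hpos y hy.1 hy.2) hC
        (mem_closure_inter_inner_pos hV hν0 hz h.symm)

end IsHalfSpaceOn

theorem exists_isHalfSpaceOn {C : Set (sphere (0 : E) 1)} (hC : IsClosed C)
    (hreg : C ⊆ closure (interior C)) {x : sphere (0 : E) 1} (hx : x ∈ frontier C)
    (hflat : IsFlatAt C x) : ∃ V ∈ 𝓝 x, ∃ ν : E, IsHalfSpaceOn C V ν := by
  obtain ⟨m, hm, hxm⟩ := hflat
  obtain ⟨k, hk0, hk1, hkm⟩ := exists_cap_subset hxm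
  set V : Set (sphere (0 : E) 1) := {z | k < ⟪(z : E), x⟫} with hV
  have hVopen : IsOpen V := isOpen_lt continuous_const (continuous_inner_sphere _)
  have hxV : x ∈ V := by rwa [hV, Set.mem_ofPred_eq, inner_self_sphere]
  have hVx : V ∈ 𝓝 x := hVopen.mem_nhds hxV
  have hside (ν : E) (hν : ν = m ∨ ν = -m) :
      (∀ z ∈ V, 0 < ⟪(z : E), ν⟫ → z ∈ C) ∨ ∀ z ∈ V, 0 < ⟪(z : E), ν⟫ → z ∉ C := by
    have hd : Disjoint {z : sphere (0 : E) 1 | 0 < ⟪(z : E), ν⟫ ∧ k < ⟪(z : E), x⟫}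
        (frontier C) := by
      refine Set.disjoint_left.2 fun z hz hzC ↦ hz.1.ne' ?_
      rcases hν with rfl | rfl <;> simp [hkm hz.2 hzC]
    exact (subset_or_subset_compl_of_disjoint_frontier (isPreconnected_half_cap hk0 _ _) hd).imp
      (fun h z hzV hz ↦ h ⟨hz, hzV⟩) (fun h z hzV hz ↦ h ⟨hz, hzV⟩)
  have hmeets (U : Set (sphere (0 : E) 1)) (hU : IsOpen U) (hxU : x ∈ closure U) :
      ∃ z ∈ U ∩ V, ⟪(z : E), m⟫ ≠ 0 :=
    (dense_setOf_inner_ne_zero (norm_ne_zero_iff.1 (hm ▸ one_ne_zero))).inter_open_nonempty _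
      (hU.inter hVopen) (Set.inter_comm V U ▸ mem_closure_iff_nhds.1 hxU V hVx)
  obtain ⟨p, ⟨hpC, hpV⟩, hp⟩ := hmeets _ isOpen_interior (hreg (hC.frontier_subset hx))
  obtain ⟨q, ⟨hqC, hqV⟩, hq⟩ :=
    hmeets _ hC.isOpen_compl (frontier_eq_closure_inter_closure.subset hx).2
  have hpos := hside m (Or.inl rfl)
  have hneg := hside (-m) (Or.inr rfl)
  simp only [inner_neg_right, neg_pos] at hneg
  refine ⟨V, hVx, ?_⟩
  rcases hpos with hpos | hpos <;> rcases hneg with hneg | hneg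
  · exact absurd (hq.lt_or_gt.elim (hneg q hqV) (hpos q hqV)) hqC
  · exact ⟨m, .of_inner_pos_of_inner_neg hC hVopen hm hpos hneg⟩
  · exact ⟨-m, .of_inner_pos_of_inner_neg hC hVopen (by rwa [norm_neg])
      (by simpa [inner_neg_right] using hneg) (by simpa [inner_neg_right] using hpos)⟩
  · exact absurd (interior_subset hpC) (hp.lt_or_gt.elim (hneg p hpV) (hpos p hpV))

theorem norm_sq_smul_add_smul {x u : E} (hx : ‖x‖ = 1) (hu : ‖u‖ = 1) (hxu : ⟪x, u⟫ = 0)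
    (a b : ℝ) : ‖a • x + b • u‖ ^ 2 = a ^ 2 + b ^ 2 := by
  rw [norm_add_sq_real, real_inner_smul_left, real_inner_smul_right, hxu, norm_smul, norm_smul,
    hx, hu, mul_one, mul_one, Real.norm_eq_abs, Real.norm_eq_abs, sq_abs, sq_abs]
  ring

/-- Besides `0`, the only angle at distance `D` from the angle `D` is `2 * D`. -/
theorem eq_one_zero_or_eq_cos_sin_two_mul {a b D : ℝ} (hD : Real.sin D ≠ 0)
    (hab : 1 = a ^ 2 + b ^ 2) (h : Real.cos D * a + Real.sin D * b = Real.cos D) :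
    a = 1 ∧ b = 0 ∨ a = Real.cos (2 * D) ∧ b = Real.sin (2 * D) := by
  have hprod : (a - 1) * (a - Real.cos (2 * D)) = 0 := by
    rw [Real.cos_two_mul]
    linear_combination (1 - a ^ 2) * Real.sin_sq_add_cos_sq D - Real.sin D ^ 2 * hab
      - (Real.sin D * b + Real.cos D * (1 - a)) * h
  rcases mul_eq_zero.1 hprod with ha | ha <;> rw [sub_eq_zero] at ha
  · rw [ha] at hab
    exact Or.inl ⟨ha, by simpa using hab⟩
  · refine Or.inr ⟨ha, mul_left_cancel₀ hD ?_⟩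
    rw [ha, Real.cos_two_mul] at h
    rw [Real.sin_two_mul]
    linear_combination h - 2 * Real.cos D * Real.sin_sq_add_cos_sq D

theorem eventually_forall_eq_greatCircle {ν : E} {D : ℝ} {x y : sphere (0 : E) 1}
    (hy : (y : E) = greatCircle (x : E) ν D) {P : sphere (0 : E) 1 → Prop}
    (hP : ∀ᶠ z in 𝓝 y, P z) :
    ∀ᶠ p : sphere (0 : E) 1 in 𝓝 x,
      ∀ z : sphere (0 : E) 1, (z : E) = greatCircle (p : E) ν D → P z := by
  obtain ⟨W, hW, hWP⟩ := mem_nhds_subtype _ _ _ |>.1 hP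
  have hcont : Continuous fun p : sphere (0 : E) 1 ↦ greatCircle (p : E) ν D := by
    unfold greatCircle; fun_prop
  filter_upwards [hcont.continuousAt.preimage_mem_nhds (hy ▸ hW)] with p hp z hz
  exact hWP (by rw [Set.mem_preimage, hz]; exact hp)

/-! ### Sets with diametral boundary -/

/-- A set of geodesic diameter at most `D` each of whose boundary points is at geodesic distance
exactly `D` from some point of the set. -/
structure HasDiametralBoundary (D : ℝ) (C : Set (sphere (0 : E) 1)) : Prop where
  cos_le_inner : ∀ x ∈ C, ∀ y ∈ C, Real.cos D ≤ ⟪(x : E), y⟫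
  exists_inner_eq : ∀ x ∈ frontier C, ∃ w ∈ C, ⟪(x : E), w⟫ = Real.cos D

namespace HasDiametralBoundary

variable {D : ℝ} {C V : Set (sphere (0 : E) 1)} {ν : E}

theorem mem_frontier (hC : HasDiametralBoundary D C) (hD : 0 < Real.sin D)
    {x w : sphere (0 : E) 1} (hx : x ∈ C) (hw : w ∈ C) (hxw : ⟪(x : E), w⟫ = Real.cos D) :
    x ∈ frontier C := by
  refine ⟨subset_closure hx, fun hint ↦ ?_⟩
  refine not_isLocalMin_inner (x := x) (w := w) ?_ ?_
  · rw [hxw, norm_eq_of_mem_sphere, ← sq_lt_one_iff_abs_lt_one]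
    nlinarith [Real.sin_sq_add_cos_sq D]
  · filter_upwards [mem_interior_iff_mem_nhds.1 hint] with z hz
    exact hxw ▸ hC.cos_le_inner z hz w hw

theorem eq_greatCircle (hC : HasDiametralBoundary D C) (hD : 0 < Real.sin D)
    (H : IsHalfSpaceOn C V ν) {x w : sphere (0 : E) 1} (hxV : x ∈ V) (hxν : ⟪(x : E), ν⟫ = 0)
    (hw : w ∈ C) (hxw : ⟪(x : E), w⟫ = Real.cos D) : (w : E) = greatCircle (x : E) ν D := by
  have hmin : IsLocalMinOn (fun z : sphere (0 : E) 1 ↦ ⟪(z : E), w⟫)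
      (Subtype.val ⁻¹' {v : E | 0 ≤ ⟪v, ν⟫}) x := by
    filter_upwards [self_mem_nhdsWithin,
      mem_nhdsWithin_of_mem_nhds (H.isOpen.mem_nhds hxV)] with z hzν hzV
    exact hxw ▸ hC.cos_le_inner z ((H.mem_iff z hzV).2 hzν) w hw
  have hνw : 0 ≤ ⟪ν, (w : E)⟫ := by
    refine inner_nonneg_of_isLocalMinOn hxν (fun a b _ hb ↦ ?_) hmin
    rw [Set.mem_ofPred_eq, inner_add_left, real_inner_smul_left, real_inner_smul_left, hxν,
      real_inner_self_eq_norm_sq]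
    positivity
  have heq := eq_of_isLocalMinOn_orthogonal H.norm_normal hxν
    (hmin.on_subset (Set.preimage_mono fun v hv ↦ hv.ge))
  have hnorm := norm_sq_smul_add_smul (norm_eq_of_mem_sphere x) H.norm_normal hxν
    ⟪(x : E), w⟫ ⟪ν, (w : E)⟫
  rw [← heq, norm_eq_of_mem_sphere, hxw] at hnorm
  have hsin : ⟪ν, (w : E)⟫ = Real.sin D := by
    rw [← sq_eq_sq₀ hνw hD.le]
    linarith [Real.sin_sq_add_cos_sq D]
  rw [heq, hxw, hsin, greatCircle]

theorem exists_mem_frontier_eq_greatCircle (hC : HasDiametralBoundary D C) (hD : 0 < Real.sin D)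
    (H : IsHalfSpaceOn C V ν) {x : sphere (0 : E) 1} (hxV : x ∈ V) (hxν : ⟪(x : E), ν⟫ = 0) :
    ∃ y ∈ frontier C, (y : E) = greatCircle (x : E) ν D := by
  obtain ⟨y, hy, hxy⟩ := hC.exists_inner_eq x ((H.mem_frontier_iff hxV).2 hxν)
  exact ⟨y, hC.mem_frontier hD hy ((H.mem_iff x hxV).2 hxν.ge) (by rw [real_inner_comm, hxy]),
    hC.eq_greatCircle hD H hxV hxν hy hxy⟩

theorem eq_or_eq_greatCircle_two_mul (hC : HasDiametralBoundary D C) (hsin : 0 < Real.sin D)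
    (hcos : Real.cos D < 0) (hCc : IsClosed C) (H : IsHalfSpaceOn C V ν) {x w : sphere (0 : E) 1}
    (hxV : x ∈ V) (hxν : ⟪(x : E), ν⟫ = 0) (hw : w ∈ C)
    (hxw : ⟪greatCircle (x : E) ν D, (w : E)⟫ = Real.cos D) :
    w = x ∨ (w : E) = greatCircle (x : E) ν (2 * D) := by
  have hmin : IsLocalMinOn (fun z : sphere (0 : E) 1 ↦ ⟪(z : E), Real.cos D • (w : E)⟫)
      (Subtype.val ⁻¹' {v : E | ⟪v, ν⟫ = 0}) x := by
    filter_upwards [self_mem_nhdsWithin,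
      mem_nhdsWithin_of_mem_nhds (H.isOpen.mem_nhds hxV)] with z hzν hzV
    obtain ⟨y, hy, hyz⟩ := hC.exists_mem_frontier_eq_greatCircle hsin H hzV hzν
    have hle := hC.cos_le_inner y (hCc.frontier_subset hy) w hw
    rw [hyz, ← hxw, inner_greatCircle_left, inner_greatCircle_left] at hle
    simpa only [real_inner_smul_right] using le_of_add_le_add_right hle
  have heq := eq_of_isLocalMinOn_orthogonal H.norm_normal hxν hmin
  set α := ⟪(x : E), w⟫ with hα
  set β := ⟪ν, (w : E)⟫ with hβ
  replace heq : (w : E) = α • (x : E) + β • ν := by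
    simp only [real_inner_smul_right, mul_smul, ← smul_add] at heq
    exact smul_right_injective E hcos.ne heq
  have hnorm := norm_sq_smul_add_smul (norm_eq_of_mem_sphere x) H.norm_normal hxν α β
  rw [← heq, norm_eq_of_mem_sphere, one_pow] at hnorm
  rw [inner_greatCircle_left] at hxw
  rcases eq_one_zero_or_eq_cos_sin_two_mul hsin.ne' hnorm hxw with ⟨ha, hb⟩ | ⟨ha, hb⟩
  · exact Or.inl (Subtype.ext (by rw [heq, ha, hb, one_smul, zero_smul, add_zero]))
  · exact Or.inr (by rw [heq, ha, hb, greatCircle])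

end HasDiametralBoundary

/-- The foot of `z` on the great subsphere orthogonal to `ν`, where `t` satisfies
`⟪z, ν⟫ = sin t`; `z` lies on the great circle through this point with velocity `ν`. -/
def foot (ν z : E) (t : ℝ) : E := (Real.cos t)⁻¹ • (z - Real.sin t • ν)

theorem foot_greatCircle (x ν : E) {t : ℝ} (ht : Real.cos t ≠ 0) :
    foot ν (greatCircle x ν t) t = x := by
  rw [foot, greatCircle, add_sub_cancel_right, inv_smul_smul₀ ht]

theorem greatCircle_foot (ν z : E) {t : ℝ} (ht : Real.cos t ≠ 0) :
    greatCircle (foot ν z t) ν t = z := by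
  rw [foot, greatCircle, smul_inv_smul₀ ht, sub_add_cancel]

theorem inner_foot {ν z : E} (hν : ‖ν‖ = 1) {t : ℝ} (hz : ⟪z, ν⟫ = Real.sin t) :
    ⟪foot ν z t, ν⟫ = 0 := by
  rw [foot, real_inner_smul_left, inner_sub_left, real_inner_smul_left,
    real_inner_self_eq_norm_sq, hν, hz]
  ring

theorem norm_foot {ν z : E} (hν : ‖ν‖ = 1) (hz1 : ‖z‖ = 1) {t : ℝ} (ht : Real.cos t ≠ 0)
    (hz : ⟪z, ν⟫ = Real.sin t) : ‖foot ν z t‖ = 1 := by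
  have h : ‖greatCircle (foot ν z t) ν t‖ ^ 2 = 1 := by
    rw [greatCircle_foot ν z ht, hz1, one_pow]
  rw [greatCircle, norm_add_sq_real, real_inner_smul_left, real_inner_smul_right,
    inner_foot hν hz, norm_smul, norm_smul, hν, mul_pow, mul_pow, Real.norm_eq_abs,
    Real.norm_eq_abs, sq_abs, sq_abs] at h
  rw [← pow_eq_one_iff_of_nonneg (norm_nonneg _) two_ne_zero]
  refine mul_left_cancel₀ (pow_ne_zero 2 ht) ?_
  linarith [Real.sin_sq_add_cos_sq t]

theorem eventually_exists_eq_greatCircle_normal {ν : E} (hν : ‖ν‖ = 1) {D : ℝ}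
    (hD₁ : Real.pi / 2 < D) (hD₂ : D < Real.pi) {x₀ y₀ : sphere (0 : E) 1}
    (hx₀ : ⟪(x₀ : E), ν⟫ = 0) (hy₀ : (y₀ : E) = greatCircle (x₀ : E) ν D)
    {V : Set (sphere (0 : E) 1)} (hV : V ∈ 𝓝 x₀) {I : Set ℝ} (hI : I ∈ 𝓝 D) :
    ∀ᶠ z : sphere (0 : E) 1 in 𝓝 y₀,
      ∃ p ∈ V, ⟪(p : E), ν⟫ = 0 ∧ ∃ t ∈ I, (z : E) = greatCircle (p : E) ν t := by
  let τ : sphere (0 : E) 1 → ℝ := fun z ↦ Real.pi - Real.arcsin ⟪(z : E), ν⟫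
  have hτ : Continuous τ :=
    continuous_const.sub (Real.continuous_arcsin.comp (continuous_inner_sphere ν))
  have hτy₀ : τ y₀ = D := by
    simp only [τ]
    rw [hy₀, inner_greatCircle_right_self hν hx₀, ← Real.sin_pi_sub,
      Real.arcsin_sin (by linarith) (by linarith), sub_sub_cancel]
  have hsin (z : sphere (0 : E) 1) : ⟪(z : E), ν⟫ = Real.sin (τ z) := by
    obtain ⟨h₁, h₂⟩ := real_inner_mem_Icc_of_norm_eq_one (norm_eq_of_mem_sphere z) hν
    rw [Real.sin_pi_sub, Real.sin_arcsin h₁ h₂]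
  have hcos : Real.cos (τ y₀) ≠ 0 := by
    rw [hτy₀]
    exact (Real.cos_neg_of_pi_div_two_lt_of_lt hD₁ (by linarith)).ne
  have hfoot : ContinuousAt (fun z : sphere (0 : E) 1 ↦ foot ν (z : E) (τ z)) y₀ := by
    unfold foot
    fun_prop (disch := assumption)
  have hfooty₀ : foot ν (y₀ : E) (τ y₀) = x₀ := by
    rw [hy₀, hτy₀, foot_greatCircle _ _ (hτy₀ ▸ hcos)]
  obtain ⟨W, hW, hWV⟩ := mem_nhds_subtype _ _ _ |>.1 hV
  filter_upwards [hτ.continuousAt.preimage_mem_nhds (hτy₀ ▸ hI),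
    hfoot.preimage_mem_nhds (hfooty₀ ▸ hW),
    (Real.continuous_cos.comp hτ).continuousAt.eventually_ne hcos] with z hzI hzW hz
  have hmem : foot ν (z : E) (τ z) ∈ sphere (0 : E) 1 :=
    mem_sphere_zero_iff_norm.2 (norm_foot hν (norm_eq_of_mem_sphere z) hz (hsin z))
  exact ⟨⟨_, hmem⟩, hWV hzW, inner_foot hν (hsin z), τ z, hzI, (greatCircle_foot ν z hz).symm⟩

theorem exists_norm_eq_one_mem_orthogonal {L : Submodule ℝ E} [L.HasOrthogonalProjection]
    (hL : L ≠ ⊤) : ∃ m ∈ Lᗮ, ‖m‖ = 1 := by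
  obtain ⟨v, hv, hv0⟩ :=
    Submodule.exists_mem_ne_zero_of_ne_bot (mt Submodule.orthogonal_eq_bot_iff.1 hL)
  exact ⟨‖v‖⁻¹ • v, Lᗮ.smul_mem _ hv, by
    rw [norm_smul, norm_inv, norm_norm, inv_mul_cancel₀ (norm_ne_zero_iff.2 hv0)]⟩

theorem exists_norm_eq_one_inner_eq_zero (hE : 2 < Module.finrank ℝ E) (x y : E) :
    ∃ u : E, ‖u‖ = 1 ∧ ⟪x, u⟫ = 0 ∧ ⟪y, u⟫ = 0 := by
  classical
  have : FiniteDimensional ℝ E := Module.finite_of_finrank_pos (by lia)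
  have hne : Submodule.span ℝ ({x, y} : Set E) ≠ ⊤ := by
    intro htop
    have hle := finrank_span_le_card (R := ℝ) ({x, y} : Set E)
    rw [htop, finrank_top, Set.toFinset_insert, Set.toFinset_singleton] at hle
    exact absurd (hle.trans Finset.card_le_two) (not_le.2 hE)
  obtain ⟨u, hu, hu1⟩ := exists_norm_eq_one_mem_orthogonal hne
  exact ⟨u, hu1, hu x (Submodule.subset_span (by simp)), hu y (Submodule.subset_span (by simp))⟩

/-! ### Small spheres -/

theorem eq_zero_of_eventually_inner_greatCircle_eq_zero (hE : 2 < Module.finrank ℝ E) {ν m : E}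
    (hν : ‖ν‖ = 1) {D : ℝ} (hsin : Real.sin D ≠ 0) (hcos : Real.cos D ≠ 0)
    {x : sphere (0 : E) 1} (hxν : ⟪(x : E), ν⟫ = 0)
    (h : ∀ᶠ z : sphere (0 : E) 1 in 𝓝 x, ⟪(z : E), ν⟫ = 0 →
      ⟪greatCircle (z : E) ν D, m⟫ = 0) : m = 0 := by
  have hconst : ∀ᶠ z : sphere (0 : E) 1 in 𝓝 x,
      ⟪(z : E), ν⟫ = 0 → ⟪(z : E), m⟫ = ⟪(x : E), m⟫ := by
    filter_upwards [h] with z hz hzν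
    have heq := (hz hzν).trans (h.self_of_nhds hxν).symm
    rw [inner_greatCircle_left, inner_greatCircle_left, add_left_inj] at heq
    exact mul_left_cancel₀ hcos heq
  have hspan := eq_of_isLocalMinOn_orthogonal (w := m) hν hxν
    (eventually_nhdsWithin_iff.2 (hconst.mono fun z hz hzν ↦ (hz hzν).ge))
  obtain ⟨u, hu, hxu, hνu⟩ := exists_norm_eq_one_inner_eq_zero hE (x : E) ν
  have hum : ⟪u, m⟫ = 0 := by
    rw [hspan, inner_add_right, real_inner_smul_right, real_inner_smul_right, real_inner_comm _ u,
      hxu, real_inner_comm _ u, hνu, mul_zero, mul_zero, add_zero]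
  have hxm : ⟪(x : E), m⟫ = 0 := by
    have hcircle := eventually_exists_eq_greatCircle hu hxu hconst
    obtain ⟨t, ⟨z, hz, hzt⟩, ht0, htpi⟩ :=
      ((hcircle.filter_mono nhdsWithin_le_nhds).and (Ioo_mem_nhdsGT Real.pi_pos)).exists
    have hzm := hz (by rw [hzt, inner_greatCircle_left, hxν, real_inner_comm, hνu]; ring)
    rw [hzt, inner_greatCircle_left, hum, mul_zero, add_zero] at hzm
    have hcos_lt := Real.cos_lt_cos_of_nonneg_of_le_pi le_rfl htpi.le ht0
    rw [Real.cos_zero] at hcos_lt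
    exact (mul_left_eq_self₀.1 hzm).resolve_left hcos_lt.ne
  have hνm : ⟪ν, m⟫ = 0 := by
    have h0 := h.self_of_nhds hxν
    rw [inner_greatCircle_left, hxm, mul_zero, zero_add] at h0
    exact (mul_eq_zero.1 h0).resolve_left hsin
  rw [hspan, hxm, hνm, zero_smul, zero_smul, add_zero]

namespace HasDiametralBoundary

variable {D : ℝ} {C V : Set (sphere (0 : E) 1)} {ν : E}

/- Otherwise a point `greatCircle p ν t` of the interior of `C` with `t` near `D` would be at
distance less than `D` from `p` and at most `D` from `greatCircle p ν (2 * D)`. -/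
theorem exists_forall_ne_greatCircle_two_mul (hC : HasDiametralBoundary D C)
    (hD₁ : Real.pi / 2 < D) (hD₂ : D < Real.pi) (hreg : C ⊆ closure (interior C))
    (hCc : IsClosed C) (H : IsHalfSpaceOn C V ν) {x₀ : sphere (0 : E) 1} (hx₀V : x₀ ∈ V)
    (hx₀ν : ⟪(x₀ : E), ν⟫ = 0) :
    ∃ x ∈ V, ⟪(x : E), ν⟫ = 0 ∧ ∀ w ∈ C, (w : E) ≠ greatCircle (x : E) ν (2 * D) := by
  by_contra! hall
  have hsin : 0 < Real.sin D := Real.sin_pos_of_pos_of_lt_pi (by linarith [Real.pi_pos]) hD₂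
  obtain ⟨y₀, hy₀, hy₀x₀⟩ := hC.exists_mem_frontier_eq_greatCircle hsin H hx₀V hx₀ν
  have hI : Set.Ioo (2 * D - Real.pi) Real.pi ∈ 𝓝 D := Ioo_mem_nhds (by linarith) hD₂
  obtain ⟨z, hz, p, hpV, hpν, t, ⟨ht₁, ht₂⟩, hzt⟩ :=
    ((mem_closure_iff_frequently.1 (hreg (hCc.frontier_subset hy₀))).and_eventually
      (eventually_exists_eq_greatCircle_normal H.norm_normal hD₁ hD₂ hx₀ν hy₀x₀
        (H.isOpen.mem_nhds hx₀V) hI)).exists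
  obtain ⟨w, hw, hwp⟩ := hall p hpV hpν
  have hpC : p ∈ C := (H.mem_iff p hpV).2 hpν.ge
  have hinner (s : ℝ) : ⟪(z : E), greatCircle (p : E) ν s⟫ = Real.cos (t - s) := by
    rw [hzt, inner_greatCircle_greatCircle (norm_eq_of_mem_sphere p) H.norm_normal hpν]
  have htD : t < D := by
    have hzp : Real.cos D < ⟪(z : E), p⟫ := (hC.cos_le_inner z (interior_subset hz) p hpC).lt_of_ne
      fun h ↦ (hC.mem_frontier hsin (interior_subset hz) hpC h.symm).2 hz
    rw [← greatCircle_zero (p : E) ν, hinner, sub_zero] at hzp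
    exact (Real.strictAntiOn_cos.lt_iff_gt ⟨by linarith, hD₂.le⟩ ⟨by linarith, ht₂.le⟩).1 hzp
  have hle := hC.cos_le_inner z (interior_subset hz) w hw
  rw [hwp, hinner, ← Real.cos_neg (t - 2 * D), neg_sub] at hle
  have := (Real.strictAntiOn_cos.le_iff_ge ⟨by linarith, hD₂.le⟩
    ⟨by linarith, by linarith⟩).1 hle
  linarith

/- Near `greatCircle x ν D`, the boundary points are at distance `D` only from points near `x`. -/
theorem eventually_frontier_eq_greatCircle (hC : HasDiametralBoundary D C)
    (hsin : 0 < Real.sin D) (hcos : Real.cos D < 0) (hCc : IsCompact C) (H : IsHalfSpaceOn C V ν)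
    {x y : sphere (0 : E) 1} (hxV : x ∈ V) (hxν : ⟪(x : E), ν⟫ = 0)
    (hx : ∀ w ∈ C, (w : E) ≠ greatCircle (x : E) ν (2 * D))
    (hy : (y : E) = greatCircle (x : E) ν D) :
    ∀ᶠ z : sphere (0 : E) 1 in 𝓝 y, z ∈ frontier C →
      ∃ p ∈ V, ⟪(p : E), ν⟫ = 0 ∧ (z : E) = greatCircle (p : E) ν D := by
  have hfar : ∀ᶠ z : sphere (0 : E) 1 in 𝓝 y, ∀ w ∈ C \ V, ⟪(z : E), w⟫ ≠ Real.cos D := by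
    refine (hCc.diff H.isOpen).eventually_forall_of_forall_eventually fun w hw ↦ ?_
    have hne : ⟪(y : E), w⟫ ≠ Real.cos D := by
      intro hyw
      rcases hC.eq_or_eq_greatCircle_two_mul hsin hcos hCc.isClosed H hxV hxν hw.1
        (hy ▸ hyw) with rfl | h
      · exact hw.2 hxV
      · exact hx w hw.1 h
    have hcont : Continuous fun q : sphere (0 : E) 1 × sphere (0 : E) 1 ↦ ⟪(q.1 : E), q.2⟫ := by
      fun_prop
    exact hcont.continuousAt.eventually_ne hne
  filter_upwards [hfar] with z hz hzC
  obtain ⟨p, hpC, hzp⟩ := hC.exists_inner_eq z hzC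
  have hpV : p ∈ V := by_contra fun h ↦ hz p ⟨hpC, h⟩ hzp
  have hpz : ⟪(p : E), z⟫ = Real.cos D := by rw [real_inner_comm, hzp]
  have hzC' := hCc.isClosed.frontier_subset hzC
  have hpν := (H.mem_frontier_iff hpV).1 (hC.mem_frontier hsin hpC hzC' hpz)
  exact ⟨p, hpV, hpν, hC.eq_greatCircle hsin H hpV hpν hzC' hpz⟩

theorem exists_not_isFlatAt (hE : 2 < Module.finrank ℝ E) (hC : HasDiametralBoundary D C)
    (hD₁ : Real.pi / 2 < D) (hD₂ : D < Real.pi) (hCc : IsCompact C)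
    (hreg : C ⊆ closure (interior C)) (hne : (frontier C).Nonempty) {R : Set (sphere (0 : E) 1)}
    (hRC : R ⊆ frontier C) (hR : frontier C ⊆ closure R) : ∃ x ∈ R, ¬ IsFlatAt C x := by
  by_contra! hflat
  have hsin : 0 < Real.sin D := Real.sin_pos_of_pos_of_lt_pi (by linarith [Real.pi_pos]) hD₂
  have hcos : Real.cos D < 0 := Real.cos_neg_of_pi_div_two_lt_of_lt hD₁ (by linarith)
  obtain ⟨x₀, hx₀⟩ := closure_nonempty_iff.1 (hne.mono hR)
  obtain ⟨V, hV, ν, H⟩ := exists_isHalfSpaceOn hCc.isClosed hreg (hRC hx₀) (hflat x₀ hx₀)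
  have hx₀V := mem_of_mem_nhds hV
  obtain ⟨x₁, hx₁V, hx₁ν, hx₁⟩ := hC.exists_forall_ne_greatCircle_two_mul hD₁ hD₂ hreg
    hCc.isClosed H hx₀V ((H.mem_frontier_iff hx₀V).1 (hRC hx₀))
  obtain ⟨y₁, hy₁, hy₁x₁⟩ := hC.exists_mem_frontier_eq_greatCircle hsin H hx₁V hx₁ν
  obtain ⟨y₂, hy₂R, hy₂⟩ := ((mem_closure_iff_frequently.1 (hR hy₁)).and_eventually
    (hC.eventually_frontier_eq_greatCircle hsin hcos hCc H hx₁V hx₁ν hx₁ hy₁x₁)).exists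
  obtain ⟨x₂, hx₂V, hx₂ν, hy₂x₂⟩ := hy₂ (hRC hy₂R)
  obtain ⟨m, hm, hy₂m⟩ := hflat y₂ hy₂R
  have hzero : m = 0 := by
    refine eq_zero_of_eventually_inner_greatCircle_eq_zero hE H.norm_normal hsin.ne' hcos.ne
      hx₂ν ?_
    filter_upwards [H.isOpen.mem_nhds hx₂V,
      eventually_forall_eq_greatCircle hy₂x₂ hy₂m] with z hzV hz hzν
    obtain ⟨y, hy, hyz⟩ := hC.exists_mem_frontier_eq_greatCircle hsin H hzV hzν
    exact hyz ▸ hz y hyz hy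
  exact one_ne_zero (α := ℝ) (by rw [← hm, hzero, norm_zero])

end HasDiametralBoundary

theorem setOf_le_inner_subset {C : Set (sphere (0 : E) 1)} (hC : IsClosed C)
    {p : sphere (0 : E) 1} (hp : p ∈ C) {k : ℝ} (hk₀ : 0 ≤ k) (hk₁ : k < 1)
    (hk : ∀ y ∈ frontier C, ⟪(y : E), p⟫ ≤ k) :
    {z : sphere (0 : E) 1 | k ≤ ⟪(z : E), p⟫} ⊆ C := by
  have hopen : {z : sphere (0 : E) 1 | k < ⟪(z : E), p⟫} ⊆ C := by
    refine (subset_or_subset_compl_of_disjoint_frontier (isPreconnected_cap hk₀ (p : E))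
      (Set.disjoint_left.2 fun z hz hzC ↦ (hk z hzC).not_gt hz)).resolve_right fun h ↦ ?_
    exact h (by rwa [Set.mem_ofPred_eq, inner_self_sphere]) hp
  intro z (hz : k ≤ ⟪(z : E), p⟫)
  rcases hz.lt_or_eq with hlt | rfl
  · exact hopen hlt
  · exact closure_minimal hopen hC (mem_closure_setOf_inner_lt
      (by rwa [abs_of_nonneg hk₀, norm_eq_of_mem_sphere]))

theorem inner_sphere_lt_one {x y : sphere (0 : E) 1} (h : x ≠ y) : ⟪(x : E), y⟫ < 1 :=
  (real_inner_le_one_of_norm_eq_one (norm_eq_of_mem_sphere x) (norm_eq_of_mem_sphere y)).lt_of_ne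
    fun h1 ↦ h (Subtype.ext ((inner_eq_one_iff_of_norm_eq_one (norm_eq_of_mem_sphere x)
      (norm_eq_of_mem_sphere y)).1 h1))

theorem exists_closedBall_union_forall_le_inner {C : Set (sphere (0 : E) 1)} (hC : IsCompact C)
    {k : ℝ} (hk : k < 1) (hle : ∀ z ∈ C, ∀ w ∈ C, k ≤ ⟪(z : E), w⟫) {x : sphere (0 : E) 1}
    (hx : ∀ w ∈ C, k < ⟪(x : E), w⟫) :
    ∃ r > 0, ∀ z ∈ C ∪ closedBall x r, ∀ w ∈ C ∪ closedBall x r, k ≤ ⟪(z : E), w⟫ := by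
  have hnear (w : sphere (0 : E) 1) (hw : k < ⟪(x : E), w⟫) :
      ∀ᶠ p : sphere (0 : E) 1 × sphere (0 : E) 1 in 𝓝 (x, w), k < ⟪(p.1 : E), p.2⟫ :=
    (isOpen_lt continuous_const (by fun_prop)).mem_nhds hw
  have hdiag := hnear x (by rwa [inner_self_sphere])
  rw [nhds_prod_eq] at hdiag
  obtain ⟨V, hV, hVV⟩ := eventually_prod_self_iff'.1 hdiag
  have hxC : ∀ᶠ z : sphere (0 : E) 1 in 𝓝 x, ∀ w ∈ C, k < ⟪(z : E), w⟫ :=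
    hC.eventually_forall_of_forall_eventually fun w hw ↦ hnear w (hx w hw)
  obtain ⟨r, hr, hball⟩ := nhds_basis_closedBall.mem_iff.1 (inter_mem hxC hV)
  refine ⟨r, hr, ?_⟩
  rintro z (hz | hz) w (hw | hw)
  · exact hle z hz w hw
  · exact real_inner_comm (z : E) w ▸ ((hball hw).1 z hz).le
  · exact ((hball hz).1 w hw).le
  · exact (hVV z (hball hz).2 w (hball hw).2).le

/-! ### Hausdorff measure of the sphere -/

section Stereographic

variable {v : E}

theorem locallyLipschitz_stereographic_symm (hv : ‖v‖ = 1) :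
    LocallyLipschitz (stereographic hv).symm := by
  intro w
  obtain ⟨K, t, ht, hK⟩ := ((contDiff_stereoInvFunAux (m := 1) (v := v)).comp
    (ℝ ∙ v)ᗮ.subtypeL.contDiff).locallyLipschitz w
  exact ⟨K, t, ht, hK⟩

theorem exists_lipschitzOnWith_stereographic (hv : ‖v‖ = 1) {x : sphere (0 : E) 1}
    (hx : x ∈ (stereographic hv).source) :
    ∃ K, ∃ t ∈ 𝓝 x, LipschitzOnWith K (stereographic hv) t := by
  have hxv : innerSL ℝ v x ≠ 1 := fun h ↦ hx <| Subtype.ext <| Eq.symm <|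
    (inner_eq_one_iff_of_norm_eq_one hv (norm_eq_of_mem_sphere x)).1 h
  have hopen : IsOpen {y : E | innerSL ℝ v y ≠ 1} :=
    isOpen_ne_fun (innerSL ℝ v).continuous continuous_const
  obtain ⟨K, t, ht, hK⟩ := (contDiffOn_stereoToFun.contDiffAt
    (hopen.mem_nhds hxv)).exists_lipschitzOnWith
  refine ⟨K * 1, Subtype.val ⁻¹' t, continuous_subtype_val.continuousAt ht, ?_⟩
  exact hK.comp (LipschitzWith.subtype_val _).lipschitzOnWith (Set.mapsTo_preimage _ _)

theorem mem_source_stereographic_neg (x : sphere (0 : E) 1) :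
    x ∈ (stereographic (norm_eq_of_mem_sphere (-x))).source := by
  rw [stereographic_source]
  exact ne_neg_of_mem_unit_sphere ℝ x

end Stereographic

section HausdorffMeasure

open Module

variable [MeasurableSpace E] [BorelSpace E]

theorem isAddHaarMeasure_hausdorffMeasure_orthogonal (n : ℕ) [Fact (finrank ℝ E = n + 1)]
    {v : E} (hv : v ≠ 0) : (μH[(n : ℝ)] : Measure (ℝ ∙ v)ᗮ).IsAddHaarMeasure := by
  have : FiniteDimensional ℝ E := .of_fact_finrank_eq_succ n
  have hfin : finrank ℝ (ℝ ∙ v)ᗮ = n := Submodule.finrank_orthogonal_span_singleton hv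
  exact hfin ▸ isAddHaarMeasure_hausdorffMeasure

theorem isLocallyFiniteMeasure_hausdorffMeasure_sphere (n : ℕ) [Fact (finrank ℝ E = n + 1)] :
    IsLocallyFiniteMeasure (μH[(n : ℝ)] : Measure (sphere (0 : E) 1)) := by
  refine ⟨fun x ↦ ?_⟩
  let σ := stereographic (norm_eq_of_mem_sphere (-x))
  have hx : x ∈ σ.source := mem_source_stereographic_neg x
  have := isAddHaarMeasure_hausdorffMeasure_orthogonal n (ne_zero_of_mem_unit_sphere (-x))
  have : FiniteDimensional ℝ E := .of_fact_finrank_eq_succ n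
  obtain ⟨K, t, ht, hK⟩ := locallyLipschitz_stereographic_symm (norm_eq_of_mem_sphere (-x)) (σ x)
  rw [← σ.left_inv hx]
  exact finiteAtFilter_hausdorffMeasure_of_lipschitzOnWith n.cast_nonneg ht hK
    (σ.symm.map_nhds_eq (σ.map_source hx)).ge (Measure.finiteAt_nhds _ _)

theorem isOpenPosMeasure_hausdorffMeasure_sphere (n : ℕ) [Fact (finrank ℝ E = n + 1)] :
    (μH[(n : ℝ)] : Measure (sphere (0 : E) 1)).IsOpenPosMeasure := by
  refine ⟨fun U hU ⟨x, hxU⟩ ↦ ?_⟩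
  let σ := stereographic (norm_eq_of_mem_sphere (-x))
  have hx : x ∈ σ.source := mem_source_stereographic_neg x
  have := isAddHaarMeasure_hausdorffMeasure_orthogonal n (ne_zero_of_mem_unit_sphere (-x))
  obtain ⟨K, t, ht, hK⟩ := exists_lipschitzOnWith_stereographic (norm_eq_of_mem_sphere (-x)) hx
  exact (hausdorffMeasure_pos_of_lipschitzOnWith n.cast_nonneg ht hK (σ.map_nhds_eq hx).ge
    (hU.mem_nhds hxU)).ne'

end HausdorffMeasure

end Sphere

/-! ### Solid and `D`-maximal sets -/

section Sph

variable {n : ℕ}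

theorem gd_le_gd_iff {x y z w : Sph n} :
    gd x y ≤ gd z w ↔ ⟪(z : Esp n), w⟫ ≤ ⟪(x : Esp n), y⟫ :=
  Real.strictAntiOn_arccos.le_iff_ge
    (real_inner_mem_Icc_of_norm_eq_one (norm_eq_of_mem_sphere x) (norm_eq_of_mem_sphere y))
    (real_inner_mem_Icc_of_norm_eq_one (norm_eq_of_mem_sphere z) (norm_eq_of_mem_sphere w))

theorem gd_le_iff {D : ℝ} (hD : D ∈ Set.Icc 0 Real.pi) {x y : Sph n} :
    gd x y ≤ D ↔ Real.cos D ≤ ⟪(x : Esp n), y⟫ := by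
  rw [gd, ← Real.strictAntiOn_arccos.le_iff_ge (real_inner_mem_Icc_of_norm_eq_one
    (norm_eq_of_mem_sphere x) (norm_eq_of_mem_sphere y)) (Real.cos_mem_Icc D),
    Real.arccos_cos hD.1 hD.2]

theorem sphDiam_le_iff {D : ℝ} (hD : D ∈ Set.Icc 0 Real.pi) {X : Set (Sph n)} :
    sphDiam X ≤ D ↔ ∀ x ∈ X, ∀ y ∈ X, Real.cos D ≤ ⟪(x : Esp n), y⟫ := by
  simp only [← gd_le_iff hD]
  constructor
  · intro h x hx y hy
    have hbdd : BddAbove {r | ∃ x ∈ X, ∃ y ∈ X, r = gd x y} :=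
      ⟨Real.pi, by rintro _ ⟨a, -, b, -, rfl⟩; exact Real.arccos_le_pi _⟩
    exact (le_csSup hbdd ⟨x, hx, y, hy, rfl⟩).trans h
  · intro h
    refine Real.sSup_le ?_ hD.1
    rintro _ ⟨x, hx, y, hy, rfl⟩
    exact h x hx y hy

theorem stronglyRegular_of_isMaxOn {C : Set (Sph n)} (hC : IsClosed C) {p x : Sph n}
    (hp : p ∈ interior C) (hx : x ∈ frontier C) (hpx : 0 ≤ ⟪(x : Esp n), p⟫)
    (hmax : IsMaxOn (fun z : Sph n ↦ ⟪(z : Esp n), p⟫) (frontier C) x) : StronglyRegular C x := by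
  have hlt : ⟪(x : Esp n), p⟫ < 1 := inner_sphere_lt_one fun h ↦ hx.2 (h ▸ hp)
  refine ⟨hx, gd x p, Real.arccos_pos.2 hlt, p, interior_subset hp, fun z hz ↦ ?_, rfl⟩
  exact setOf_le_inner_subset hC (interior_subset hp) hpx hlt hmax (gd_le_gd_iff.1 hz)

theorem frontier_subset_closure_stronglyRegular {C : Set (Sph n)} (hC : IsClosed C)
    (hreg : C ⊆ closure (interior C)) : frontier C ⊆ closure {x | StronglyRegular C x} := by
  intro y hy
  refine Metric.mem_closure_iff.2 fun ε hε ↦ ?_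
  obtain ⟨p, hp, hyp⟩ := Metric.mem_closure_iff.1 (hreg (hC.frontier_subset hy)) (min 1 (ε / 2))
    (lt_min one_pos (half_pos hε))
  obtain ⟨x, hx, hmax⟩ := isClosed_frontier.isCompact.exists_isMaxOn ⟨y, hy⟩
    (continuous_inner_sphere (p : Esp n)).continuousOn
  have hle : ⟪(y : Esp n), p⟫ ≤ ⟪(x : Esp n), p⟫ := hmax hy
  have hyp1 := hyp.trans_le (min_le_left _ _)
  refine ⟨x, stronglyRegular_of_isMaxOn hC hp hx (le_trans ?_ hle) hmax, ?_⟩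
  · rw [inner_sphere_eq_one_sub_dist_sq]
    nlinarith [dist_nonneg (x := y) (y := p)]
  · rw [inner_sphere_eq_one_sub_dist_sq, inner_sphere_eq_one_sub_dist_sq] at hle
    have hxp : dist x p ≤ dist y p :=
      (sq_le_sq₀ dist_nonneg dist_nonneg).1 (by linarith)
    linarith [dist_triangle_right y x p, hyp.trans_le (min_le_right _ _)]

theorem DMaximal.hasDiametralBoundary {D : ℝ} {C : Set (Sph n)} (hC : DMaximal n D C)
    (hD : D ∈ Set.Ioo 0 Real.pi) : HasDiametralBoundary D C := by
  obtain ⟨hcomp, hdiam, hmax⟩ := hC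
  have hDIcc := Set.Ioo_subset_Icc_self hD
  have hle := (sphDiam_le_iff hDIcc).1 hdiam
  refine ⟨hle, fun x hx ↦ ?_⟩
  by_contra! hne
  have hlt (w) (hw : w ∈ C) : Real.cos D < ⟪(x : Esp n), w⟫ :=
    (hle x (hcomp.isClosed.frontier_subset hx) w hw).lt_of_ne' (hne w hw)
  have hcos : Real.cos D < 1 := by
    simpa using Real.strictAntiOn_cos (Set.left_mem_Icc.2 Real.pi_pos.le) hDIcc hD.1
  obtain ⟨r, hr, hball⟩ := exists_closedBall_union_forall_le_inner hcomp hcos hle hlt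
  have : Fact (Module.finrank ℝ (Esp n) = n + 1) := ⟨finrank_euclideanSpace_fin⟩
  have := isLocallyFiniteMeasure_hausdorffMeasure_sphere (E := Esp n) n
  have := isOpenPosMeasure_hausdorffMeasure_sphere (E := Esp n) n
  have hlarger : sphVol n C < sphVol n (C ∪ closedBall x r) :=
    measure_lt_measure_union_of_mem_frontier (μ := μH[n]) hcomp.isClosed
      hcomp.measure_lt_top.ne hx (closedBall_mem_nhds x hr)
  refine hlarger.not_ge (hmax ▸ le_sSup ?_)
  exact ⟨_, hcomp.union (isCompact_closedBall x r), (sphDiam_le_iff hDIcc).2 hball, rfl⟩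

theorem Solid.frontier_nonempty {C : Set (Sph n)} (hC : Solid C) (hn : n ≠ 0) :
    (frontier C).Nonempty := by
  have : PreconnectedSpace (Sph n) := by
    refine Subtype.preconnectedSpace (isPreconnected_sphere ?_ _ _)
    rw [← Module.finrank_eq_rank, finrank_euclideanSpace_fin]
    exact_mod_cast Nat.lt_add_of_pos_left hn.bot_lt
  exact nonempty_frontier_iff.2 ⟨hC.1, hC.2.2.1⟩

theorem isFlatAt_of_stronglyRegular_mem {C : Set (Sph n)} (hC : IsClosed C)
    (hreg : C ⊆ closure (interior C)) {x : Sph n} {L : Submodule ℝ (Esp n)} (hL : L ≠ ⊤)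
    {ε : ℝ} (hε : 0 < ε) (hmem : ∀ y : Sph n, StronglyRegular C y → gd y x < ε → (y : Esp n) ∈ L) :
    IsFlatAt C x := by
  obtain ⟨m, hm, hm1⟩ := exists_norm_eq_one_mem_orthogonal hL
  have hV : IsOpen {y : Sph n | gd y x < ε} :=
    isOpen_lt (Real.continuous_arccos.comp (continuous_inner_sphere _)) continuous_const
  have hxV : gd x x < ε := by rwa [gd, inner_self_sphere, Real.arccos_one]
  have hzero : IsClosed {y : Sph n | ⟪(y : Esp n), m⟫ = 0} :=
    isClosed_eq (continuous_inner_sphere m) continuous_const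
  refine ⟨m, hm1, ?_⟩
  filter_upwards [hV.mem_nhds hxV] with y hyV hy
  refine closure_minimal (fun z hz ↦ ?_) hzero
    (hV.inter_closure ⟨hyV, frontier_subset_closure_stronglyRegular hC hreg hy⟩)
  exact (Submodule.mem_orthogonal L m).1 hm z (hmem z hz.2 hz.1)

theorem DMaximal_good_base_point_general (hn : 2 ≤ n) {D : ℝ} (hD₁ : Real.pi / 2 < D)
    (hD₂ : D < Real.pi) {C : Set (Sph n)} (hC : HasDiametralBoundary D C) (hCsolid : Solid C) :
    ∃ x₀ : Sph n, StronglyRegular C x₀ ∧ ∀ L : Submodule ℝ (Esp n), L ≠ ⊤ → ∀ ε : ℝ, 0 < ε →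
      ∃ y : Sph n, StronglyRegular C y ∧ gd y x₀ < ε ∧ (y : Esp n) ∉ L := by
  have hne := hCsolid.frontier_nonempty (by lia)
  obtain ⟨-, hcomp, -, hreg⟩ := hCsolid
  have hfinrank : 2 < Module.finrank ℝ (Esp n) := by
    rw [finrank_euclideanSpace_fin]
    lia
  obtain ⟨x₀, hx₀, hflat⟩ := hC.exists_not_isFlatAt (R := {x | StronglyRegular C x}) hfinrank hD₁
    hD₂ hcomp hreg.le hne (fun _ h ↦ h.1)
    (frontier_subset_closure_stronglyRegular hcomp.isClosed hreg.le)
  refine ⟨x₀, hx₀, fun L hL ε hε ↦ ?_⟩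
  by_contra! hmem
  exact hflat (isFlatAt_of_stronglyRegular_mem hcomp.isClosed hreg.le hL hε hmem)

end Sph

/-- a solid `D`-maximal set (`π/2 < D < π`) admits a strongly regular
boundary point `x₀` such that arbitrarily close to `x₀` there are strongly regular
boundary points outside any given 2-dimensional linear subspace through `x₀`. -/
theorem DMaximal_good_base_point (n : ℕ) (hn : 2 ≤ n) (D : ℝ)
    (hD0 : Real.pi / 2 < D) (hD1 : D < Real.pi) (C : Set (Sph n))
    (hC : DMaximal n D C) (hCsolid : Solid C) :
    ∃ x₀ : Sph n, StronglyRegular C x₀ ∧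
      ∀ L : Submodule ℝ (Esp n), Module.finrank ℝ L = 2 → (x₀ : Esp n) ∈ L →
        ∀ ε : ℝ, 0 < ε → ε < Real.pi / 2 →
          ∃ y : Sph n, StronglyRegular C y ∧ gd y x₀ < ε ∧ (y : Esp n) ∉ L := by
  have hDpi : D ∈ Set.Ioo 0 Real.pi := ⟨(half_pos Real.pi_pos).trans hD0, hD1⟩
  obtain ⟨x₀, hx₀, hL⟩ :=
    DMaximal_good_base_point_general hn hD0 hD1 (hC.hasDiametralBoundary hDpi) hCsolid
  refine ⟨x₀, hx₀, fun L hfin _ ε hε _ ↦ hL L ?_ ε hε⟩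
  rintro rfl
  rw [finrank_top, finrank_euclideanSpace_fin] at hfin
  lia
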